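/- arXiv:1804.02785 — 8 statements merged into one kernel-verified Lean document; each statement's English description precedes it below -/
import Mathlib

section
/- Let G be a connected weighted undirected graph on vertex set {1,…,n} (n ≥ 2) with positive edge weights and Laplacian matrix L, let u ≠ v be two vertices, let w > 0, and set b = e_u − e_v (difference of standard basis vectors). Then for any vector x solving L x = b (such x exists since G is connected), det((L + w·b·bᵀ)_{−n}) = (1 + w·bᵀx) · det(L_{−n}); equivalently, adding an edge (u,v) of weight w multiplies the weighted number of spanning trees by 1 + w·R_G(u,v). -/
open Matrix

/-- The Laplacian matrix of a weighted graph given by a weight function. -/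
def lapG {V : Type*} [Fintype V] [DecidableEq V] (W : V → V → ℝ) : Matrix V V ℝ :=
  fun i j => if i = j then ∑ k, W i k else -(W i j)

/-- The weighted number of spanning trees: determinant of the Laplacian with the
row and column of the last vertex removed. -/
def nst {n : ℕ} (W : Fin (n + 1) → Fin (n + 1) → ℝ) : ℝ :=
  ((lapG W).submatrix Fin.castSucc Fin.castSucc).det

theorem stmt0 (n : ℕ) (hn : 1 ≤ n) (W : Fin (n + 1) → Fin (n + 1) → ℝ)
    (hsym : ∀ i j, W i j = W j i) (hdiag : ∀ i, W i i = 0) (hnonneg : ∀ i j, 0 ≤ W i j)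
    (hconn : (SimpleGraph.fromRel (fun i j => W i j ≠ 0)).Connected)
    (u v : Fin (n + 1)) (huv : u ≠ v) (w : ℝ) (hw : 0 < w)
    (x : Fin (n + 1) → ℝ)
    (hx : (lapG W).mulVec x = (Pi.single u 1 - Pi.single v 1)) :
    ((lapG W + w • Matrix.vecMulVec (Pi.single u 1 - Pi.single v 1)
        (Pi.single u 1 - Pi.single v 1)).submatrix Fin.castSucc Fin.castSucc).det
      = (1 + w * ((Pi.single u 1 - Pi.single v 1) ⬝ᵥ x)) *
        ((lapG W).submatrix Fin.castSucc Fin.castSucc).det := by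
  have key : ∀ b : Fin (n + 1) → ℝ, (∑ i, b i = 0) → (lapG W).mulVec x = b →
      ((lapG W + w • Matrix.vecMulVec b b).submatrix Fin.castSucc Fin.castSucc).det
      = (1 + w * (b ⬝ᵥ x)) * ((lapG W).submatrix Fin.castSucc Fin.castSucc).det := by
    intro b hb hxb
    have hrow : ∀ i, ∑ j, lapG W i j = 0 := by
      intro i
      have h : ∀ j, lapG W i j = (if i = j then ∑ k, W i k else 0) - W i j := by
        intro j
        unfold lapG
        by_cases hij : i = j
        · subst hij; simp [hdiag]
        · simp [hij]
      simp [h, Finset.sum_sub_distrib]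
    set A := (lapG W).submatrix Fin.castSucc Fin.castSucc with hA
    set c : Fin n → ℝ := fun i => b (Fin.castSucc i) with hc
    set y : Fin n → ℝ := fun i => x (Fin.castSucc i) - x (Fin.last n) with hy
    have hAy : A *ᵥ y = c := by
      funext i
      have h1 := congrFun hxb (Fin.castSucc i)
      have h2 := hrow (Fin.castSucc i)
      simp only [Matrix.mulVec, dotProduct] at h1
      rw [Fin.sum_univ_castSucc] at h1 h2
      simp only [Matrix.mulVec, dotProduct, hA, hy, hc, Matrix.submatrix_apply, mul_sub,
        Finset.sum_sub_distrib, ← Finset.sum_mul]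
      linear_combination h1 - x (Fin.last n) * h2
    have hcy : b ⬝ᵥ x = c ⬝ᵥ y := by
      rw [Fin.sum_univ_castSucc] at hb
      simp only [dotProduct, hy, hc, mul_sub, Finset.sum_sub_distrib, ← Finset.sum_mul]
      rw [Fin.sum_univ_castSucc]
      linear_combination x (Fin.last n) * hb
    have hM : (lapG W + w • Matrix.vecMulVec b b).submatrix Fin.castSucc Fin.castSucc
        = A * (1 + Matrix.vecMulVec y (w • c)) := by
      rw [mul_add, mul_one, Matrix.mul_vecMulVec, hAy]
      ext i j
      simp [hA, hc, Matrix.vecMulVec_apply]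
    rw [hM, Matrix.det_mul, Matrix.vecMulVec_eq Unit,
      Matrix.det_one_add_replicateCol_mul_replicateRow, hcy, smul_dotProduct, smul_eq_mul]
    ring
  exact key _ (by simp [Finset.sum_sub_distrib]) hx
end

section
/- Let G = (V,E) be a connected weighted undirected graph with positive edge weights and let Q be a finite set of candidate edges on V, each with a positive weight. Then the set function f : 2^Q → ℝ defined by f(S) = log T(G + S) is monotone (f(S) ≤ f(T) whenever S ⊆ T ⊆ Q) and submodular (f(S ∪ {e}) − f(S) ≥ f(T ∪ {e}) − f(T) for all S ⊆ T ⊆ Q and e ∈ Q ∖ T). -/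
open Matrix

/-- The weight function obtained from `W` by adding the edges in `S`, where the
edge `e ∈ S` has weight `qw e`. -/
def addEdgeSet {n : ℕ} (W : Fin (n + 1) → Fin (n + 1) → ℝ)
    (qw : Sym2 (Fin (n + 1)) → ℝ) (S : Finset (Sym2 (Fin (n + 1)))) :
    Fin (n + 1) → Fin (n + 1) → ℝ :=
  fun a b => W a b + if s(a, b) ∈ S then qw s(a, b) else 0

/-- `f S = log T(G + S)`. -/
noncomputable def logNst {n : ℕ} (W : Fin (n + 1) → Fin (n + 1) → ℝ)
    (qw : Sym2 (Fin (n + 1)) → ℝ) (S : Finset (Sym2 (Fin (n + 1)))) : ℝ :=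
  Real.log (nst (addEdgeSet W qw S))


/-- The quadratic form of the Laplacian. -/
lemma lapG_quad {V : Type*} [Fintype V] [DecidableEq V] (W : V → V → ℝ)
    (hs : ∀ i j, W i j = W j i) (hd : ∀ i, W i i = 0) (x : V → ℝ) :
    2 * (x ⬝ᵥ (lapG W *ᵥ x)) = ∑ i, ∑ j, W i j * (x i - x j) ^ 2 := by
  have h1 : ∀ i, (lapG W *ᵥ x) i = ∑ j, W i j * (x i - x j) := by
    intro i
    have : ∀ j, lapG W i j * x j = (if i = j then (∑ k, W i k) * x i else 0) - W i j * x j := by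
      intro j
      unfold lapG
      split_ifs with h
      · subst h; simp [hd]
      · ring
    simp only [mulVec, dotProduct, this, Finset.sum_sub_distrib, mul_sub]
    simp [Finset.sum_mul]
  have h2 : x ⬝ᵥ (lapG W *ᵥ x) = ∑ i, ∑ j, x i * (W i j * (x i - x j)) := by
    simp only [dotProduct, h1, Finset.mul_sum]
  have h3 : x ⬝ᵥ (lapG W *ᵥ x) = ∑ i, ∑ j, x j * (W i j * (x j - x i)) := by
    rw [h2, Finset.sum_comm]
    refine Finset.sum_congr rfl fun i _ => Finset.sum_congr rfl fun j _ => ?_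
    rw [hs]
  rw [two_mul]
  nth_rewrite 1 [h2]
  rw [h3, ← Finset.sum_add_distrib]
  refine Finset.sum_congr rfl fun i _ => ?_
  rw [← Finset.sum_add_distrib]
  refine Finset.sum_congr rfl fun j _ => ?_
  ring

/-- The reduced Laplacian. -/
def redL {n : ℕ} (W : Fin (n + 1) → Fin (n + 1) → ℝ) : Matrix (Fin n) (Fin n) ℝ :=
  (lapG W).submatrix Fin.castSucc Fin.castSucc

lemma redL_quad {n : ℕ} (W : Fin (n + 1) → Fin (n + 1) → ℝ)
    (hs : ∀ i j, W i j = W j i) (hd : ∀ i, W i i = 0) (y : Fin n → ℝ) :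
    2 * (y ⬝ᵥ (redL W *ᵥ y)) = ∑ i, ∑ j, W i j *
      ((Fin.snoc y 0 : Fin (n + 1) → ℝ) i - (Fin.snoc y 0 : Fin (n + 1) → ℝ) j) ^ 2 := by
  rw [← lapG_quad W hs hd]
  congr 1
  simp [dotProduct, mulVec, Fin.sum_univ_castSucc, redL]

lemma redL_herm {n : ℕ} (W : Fin (n + 1) → Fin (n + 1) → ℝ)
    (hs : ∀ i j, W i j = W j i) : (redL W).IsHermitian := by
  refine Matrix.IsHermitian.submatrix ?_ _
  ext i j
  simp only [conjTranspose_apply, star_trivial, lapG]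
  by_cases h : i = j
  · subst h; rfl
  · rw [if_neg h, if_neg (Ne.symm h), hs]

lemma redL_posDef {n : ℕ} (W : Fin (n + 1) → Fin (n + 1) → ℝ)
    (hs : ∀ i j, W i j = W j i) (hd : ∀ i, W i i = 0) (hnn : ∀ i j, 0 ≤ W i j)
    (hconn : (SimpleGraph.fromRel (fun i j => W i j ≠ 0)).Connected) :
    (redL W).PosDef := by
  refine .of_dotProduct_mulVec_pos (redL_herm W hs) fun {y} hy => ?_
  rw [star_trivial]
  have hq := redL_quad W hs hd y
  set x : Fin (n + 1) → ℝ := Fin.snoc y 0 with hx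
  have hnn2 : ∀ i j, 0 ≤ W i j * (x i - x j) ^ 2 := fun i j =>
    mul_nonneg (hnn i j) (sq_nonneg _)
  by_contra hcon
  have h0 : ∑ i, ∑ j, W i j * (x i - x j) ^ 2 = 0 :=
    le_antisymm (by linarith) (Finset.sum_nonneg fun i _ => Finset.sum_nonneg fun j _ => hnn2 i j)
  have hz : ∀ i j, W i j * (x i - x j) ^ 2 = 0 := by
    intro i j
    have := (Finset.sum_eq_zero_iff_of_nonneg
      (fun i _ => Finset.sum_nonneg fun j _ => hnn2 i j)).1 h0 i (Finset.mem_univ _)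
    exact (Finset.sum_eq_zero_iff_of_nonneg (fun j _ => hnn2 i j)).1 this j (Finset.mem_univ _)
  have hadj : ∀ i j, W i j ≠ 0 → x i = x j := by
    intro i j hij
    have := (mul_eq_zero.1 (hz i j)).resolve_left hij
    exact sub_eq_zero.1 (pow_eq_zero_iff (two_ne_zero) |>.1 this)
  have hwalk : ∀ i j, (SimpleGraph.fromRel (fun i j => W i j ≠ 0)).Walk i j → x i = x j := by
    intro i j p
    induction p with
    | nil => rfl
    | cons h _ ih =>
      rw [← ih]
      rw [SimpleGraph.fromRel_adj] at h
      rcases h.2 with h | h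
      · exact hadj _ _ h
      · exact (hadj _ _ h).symm
  apply hy
  funext i
  obtain ⟨p⟩ := hconn.preconnected (Fin.castSucc i) (Fin.last n)
  have := hwalk _ _ p
  simpa [hx] using this

/-- Antitonicity of the inverse quadratic form. -/
lemma inv_quad_anti {n : ℕ} (A B : Matrix (Fin n) (Fin n) ℝ) (hA : A.PosDef) (hB : B.PosDef)
    (hAB : ∀ y, y ⬝ᵥ (A *ᵥ y) ≤ y ⬝ᵥ (B *ᵥ y)) (b : Fin n → ℝ) :
    b ⬝ᵥ (B⁻¹ *ᵥ b) ≤ b ⬝ᵥ (A⁻¹ *ᵥ b) := by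
  have uA : IsUnit A.det := hA.det_pos.ne'.isUnit
  have uB : IsUnit B.det := hB.det_pos.ne'.isUnit
  set x := A⁻¹ *ᵥ b with hx
  set y := B⁻¹ *ᵥ b with hy
  have hAx : A *ᵥ x = b := by rw [hx, mulVec_mulVec, mul_nonsing_inv _ uA, one_mulVec]
  have hBy : B *ᵥ y = b := by rw [hy, mulVec_mulVec, mul_nonsing_inv _ uB, one_mulVec]
  have h := hA.posSemidef.dotProduct_mulVec_nonneg (x - y)
  have hAT : Aᵀ = A := by simpa using hA.isHermitian.eq
  have hsym : x ⬝ᵥ (A *ᵥ y) = b ⬝ᵥ y := by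
    rw [dotProduct_mulVec, ← mulVec_transpose, hAT, hAx]
  rw [star_trivial, mulVec_sub, dotProduct_sub, sub_dotProduct, sub_dotProduct, hsym, hAx,
    dotProduct_comm x b, dotProduct_comm y b] at h
  have h2 := hAB y
  rw [hBy, dotProduct_comm y b] at h2
  linarith

lemma inv_quad_nonneg {n : ℕ} (A : Matrix (Fin n) (Fin n) ℝ) (hA : A.PosDef) (b : Fin n → ℝ) :
    0 ≤ b ⬝ᵥ (A⁻¹ *ᵥ b) := by
  simpa using hA.inv.posSemidef.dotProduct_mulVec_nonneg b

lemma det_rank_one {n : ℕ} (A : Matrix (Fin n) (Fin n) ℝ) (hA : A.PosDef) (b : Fin n → ℝ)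
    (c : ℝ) : (A + vecMulVec (c • b) b).det = A.det * (1 + c * (b ⬝ᵥ (A⁻¹ *ᵥ b))) := by
  have uA : IsUnit A.det := hA.det_pos.ne'.isUnit
  rw [vecMulVec_eq Unit, det_add_replicateCol_mul_replicateRow uA]
  congr 1
  rw [det_unique, Matrix.add_apply, Matrix.one_apply_eq, Matrix.mul_assoc]
  congr 1
  simp only [dotProduct, Matrix.mul_apply, mulVec, Finset.mul_sum, replicateRow_apply,
    replicateCol_apply, Pi.smul_apply, smul_eq_mul]
  refine Finset.sum_congr rfl fun i _ => Finset.sum_congr rfl fun j _ => ?_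
  ring

lemma redL_insert {n : ℕ} (W : Fin (n + 1) → Fin (n + 1) → ℝ)
    (qw : Sym2 (Fin (n + 1)) → ℝ) (e : Sym2 (Fin (n + 1))) (he : ¬ e.IsDiag) :
    ∃ b : Fin n → ℝ, ∀ S : Finset (Sym2 (Fin (n + 1))), e ∉ S →
      redL (addEdgeSet W qw (insert e S)) =
        redL (addEdgeSet W qw S) + vecMulVec (qw e • b) b := by
  induction e using Sym2.ind with
  | _ u v =>
  have huv : u ≠ v := by simpa using he
  let b : Fin (n + 1) → ℝ := fun i => (if i = u then 1 else 0) - (if i = v then 1 else 0)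
  refine ⟨fun i => b i.castSucc, fun S hS => ?_⟩
  have hadd : ∀ i j, addEdgeSet W qw (insert s(u, v) S) i j =
      addEdgeSet W qw S i j + qw s(u, v) *
        ((if i = u then (if j = v then 1 else 0) else 0) +
          (if i = v then (if j = u then 1 else 0) else 0)) := by
    intro i j
    unfold addEdgeSet
    by_cases h : s(i, j) = s(u, v)
    · rw [h, if_pos (Finset.mem_insert_self _ _), if_neg hS]
      rcases Sym2.eq_iff.1 h with ⟨rfl, rfl⟩ | ⟨rfl, rfl⟩
      · simp [huv]
      · simp [huv.symm]
    · have h1 : s(i, j) ∈ insert s(u, v) S ↔ s(i, j) ∈ S := by simp [Finset.mem_insert, h]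
      simp only [h1]
      have h2 : ¬ (i = u ∧ j = v) := fun ⟨a, b⟩ => h (by rw [a, b])
      have h3 : ¬ (i = v ∧ j = u) := fun ⟨a, b⟩ => h (by rw [a, b, Sym2.eq_swap])
      rw [← ite_and, ← ite_and, if_neg h2, if_neg h3]
      ring
  have key : ∀ i j, lapG (addEdgeSet W qw (insert s(u, v) S)) i j =
      lapG (addEdgeSet W qw S) i j + qw s(u, v) * b i * b j := by
    intro i j
    unfold lapG
    simp only [hadd]
    by_cases hij : i = j
    · subst hij
      simp only [if_true, Finset.sum_add_distrib, ← Finset.mul_sum]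
      have e1 : ∀ w : Fin (n + 1), ∀ p : Prop, ∀ [Decidable p],
          ∑ k, (if p then (if k = w then (1:ℝ) else 0) else 0) = if p then 1 else 0 := by
        intro w p _
        split_ifs <;> simp
      rw [e1, e1, mul_assoc]
      congr 2
      simp only [b]
      by_cases h1 : i = u <;> by_cases h2 : i = v
      · exact absurd (h1.symm.trans h2) huv
      all_goals simp [h1, h2, huv, huv.symm]
    · simp only [if_neg hij, b]
      by_cases h1 : i = u <;> by_cases h2 : i = v <;> by_cases h3 : j = u <;>
        by_cases h4 : j = v <;> simp_all <;> ring
  ext i j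
  simp only [redL, submatrix_apply, key, Matrix.add_apply, vecMulVec_apply, Pi.smul_apply,
    smul_eq_mul]

theorem stmt2 (n : ℕ) (W : Fin (n + 1) → Fin (n + 1) → ℝ)
    (hsym : ∀ i j, W i j = W j i) (hdiag : ∀ i, W i i = 0) (hnonneg : ∀ i j, 0 ≤ W i j)
    (hconn : (SimpleGraph.fromRel (fun i j => W i j ≠ 0)).Connected)
    (Q : Finset (Sym2 (Fin (n + 1)))) (hQ : ∀ e ∈ Q, ¬ e.IsDiag)
    (qw : Sym2 (Fin (n + 1)) → ℝ) (hqw : ∀ e ∈ Q, 0 < qw e) :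
    (∀ S T : Finset (Sym2 (Fin (n + 1))), S ⊆ T → T ⊆ Q →
      logNst W qw S ≤ logNst W qw T) ∧
    (∀ S T : Finset (Sym2 (Fin (n + 1))), S ⊆ T → T ⊆ Q → ∀ e ∈ Q, e ∉ T →
      logNst W qw (insert e T) - logNst W qw T ≤
        logNst W qw (insert e S) - logNst W qw S) := by
  have as : ∀ S i j, addEdgeSet W qw S i j = addEdgeSet W qw S j i := by
    intro S i j
    unfold addEdgeSet
    rw [hsym, Sym2.eq_swap]
  have ad : ∀ S, S ⊆ Q → ∀ i, addEdgeSet W qw S i i = 0 := by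
    intro S hS i
    unfold addEdgeSet
    rw [hdiag, if_neg (fun h => hQ _ (hS h) (by simp)), add_zero]
  have amono : ∀ S T, S ⊆ T → T ⊆ Q → ∀ i j, addEdgeSet W qw S i j ≤ addEdgeSet W qw T i j := by
    intro S T hST hT i j
    unfold addEdgeSet
    by_cases h : s(i, j) ∈ S
    · rw [if_pos h, if_pos (hST h)]
    · rw [if_neg h]
      split_ifs with h'
      · have := hqw _ (hT h'); linarith
      · exact le_rfl
  have aW : ∀ S, S ⊆ Q → ∀ i j, W i j ≤ addEdgeSet W qw S i j := by
    intro S hS i j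
    simpa [addEdgeSet] using amono ∅ S (by simp) hS i j
  have ann : ∀ S, S ⊆ Q → ∀ i j, 0 ≤ addEdgeSet W qw S i j := fun S hS i j =>
    (hnonneg i j).trans (aW S hS i j)
  have apd : ∀ S, S ⊆ Q → (redL (addEdgeSet W qw S)).PosDef := by
    intro S hS
    refine redL_posDef _ (as S) (ad S hS) (ann S hS) (hconn.mono ?_)
    intro i j hij
    rw [SimpleGraph.fromRel_adj] at hij ⊢
    have aux : ∀ i j, W i j ≠ 0 → addEdgeSet W qw S i j ≠ 0 := fun i j h =>
      (((hnonneg i j).lt_of_ne' h).trans_le (aW S hS i j)).ne'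
    exact ⟨hij.1, hij.2.imp (aux _ _) (aux _ _)⟩
  have aquad : ∀ S T, S ⊆ T → T ⊆ Q → ∀ y, y ⬝ᵥ (redL (addEdgeSet W qw S) *ᵥ y) ≤
      y ⬝ᵥ (redL (addEdgeSet W qw T) *ᵥ y) := by
    intro S T hST hT y
    have h1 := redL_quad _ (as S) (ad S (hST.trans hT)) y
    have h2 := redL_quad _ (as T) (ad T hT) y
    have h3 := Finset.sum_le_sum fun i (_ : i ∈ Finset.univ) =>
      Finset.sum_le_sum fun j (_ : j ∈ Finset.univ) =>
      mul_le_mul_of_nonneg_right (amono S T hST hT i j)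
        (sq_nonneg ((Fin.snoc y 0 : Fin (n + 1) → ℝ) i - (Fin.snoc y 0 : Fin (n + 1) → ℝ) j))
    linarith
  have gain : ∀ e ∈ Q, ∃ b : Fin n → ℝ, ∀ S, S ⊆ Q → e ∉ S →
      logNst W qw (insert e S) - logNst W qw S =
        Real.log (1 + qw e * (b ⬝ᵥ ((redL (addEdgeSet W qw S))⁻¹ *ᵥ b))) := by
    intro e he
    obtain ⟨b, hb⟩ := redL_insert W qw e (hQ e he)
    refine ⟨b, fun S hS heS => ?_⟩
    have hp := apd S hS
    have h0 := mul_nonneg (hqw e he).le (inv_quad_nonneg _ hp b)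
    change Real.log (redL (addEdgeSet W qw (insert e S))).det -
      Real.log (redL (addEdgeSet W qw S)).det = _
    rw [hb S heS, det_rank_one _ hp, Real.log_mul hp.det_pos.ne' (by linarith)]
    ring
  refine ⟨?_, ?_⟩
  · intro S T hST hT
    have main : ∀ U : Finset (Sym2 (Fin (n + 1))), S ∪ U ⊆ Q →
        logNst W qw S ≤ logNst W qw (S ∪ U) := by
      intro U
      induction U using Finset.induction_on with
      | empty => intro _; simp
      | insert e U _ ih =>
        intro hU
        rw [Finset.union_insert] at hU ⊢
        have hU' := (Finset.subset_insert _ _).trans hU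
        refine (ih hU').trans ?_
        by_cases h : e ∈ S ∪ U
        · rw [Finset.insert_eq_of_mem h]
        · have he := hU (Finset.mem_insert_self _ _)
          obtain ⟨b, hb⟩ := gain e he
          have h1 := hb _ hU' h
          have h0 := mul_nonneg (hqw e he).le (inv_quad_nonneg _ (apd _ hU') b)
          have h2 := Real.log_nonneg (le_add_of_nonneg_right h0)
          linarith
    have := main T (by rwa [Finset.union_eq_right.2 hST])
    rwa [Finset.union_eq_right.2 hST] at this
  · intro S T hST hT e he heT
    obtain ⟨b, hb⟩ := gain e he
    rw [hb T hT heT, hb S (hST.trans hT) (fun h => heT (hST h))]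
    have h0 := mul_nonneg (hqw e he).le (inv_quad_nonneg _ (apd T hT) b)
    refine Real.log_le_log (by linarith) ?_
    have h1 := mul_le_mul_of_nonneg_left (inv_quad_anti _ _ (apd S (hST.trans hT)) (apd T hT)
      (aquad S T hST hT) b) (hqw e he).le
    linarith
end

section
/- For any non-negative real numbers a, b and any 0 < ε ≤ 1/2 such that (1 − ε)·a ≤ b ≤ (1 + ε)·a, it holds that (1 − 2ε)·log(1 + a) ≤ log(1 + b) ≤ (1 + 2ε)·log(1 + a). -/
theorem stmt3 (a b ε : ℝ) (ha : 0 ≤ a) (hb : 0 ≤ b)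
    (hε0 : 0 < ε) (hε : ε ≤ 1 / 2)
    (h1 : (1 - ε) * a ≤ b) (h2 : b ≤ (1 + ε) * a) :
    (1 - 2 * ε) * Real.log (1 + a) ≤ Real.log (1 + b) ∧
      Real.log (1 + b) ≤ (1 + 2 * ε) * Real.log (1 + a) := by
  have hpos : 0 < 1 + a := by linarith
  have hea : 0 ≤ ε * a := mul_nonneg hε0.le ha
  constructor
  · rw [← Real.log_rpow hpos]
    apply Real.log_le_log (Real.rpow_pos_of_pos hpos _)
    have := rpow_one_add_le_one_add_mul_self (s := a) (p := 1 - 2 * ε)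
      (by linarith) (by linarith) (by linarith)
    nlinarith
  · rw [← Real.log_rpow hpos]
    apply Real.log_le_log (by linarith)
    have := one_add_mul_self_le_rpow_one_add (s := a) (p := 1 + 2 * ε)
      (by linarith) (by linarith)
    nlinarith
end

section
/- Let Q be a finite set, let f : 2^Q → ℝ be monotone and submodular, let 0 < ε ≤ 1/2 and let k ≥ 1 be an integer. Let O ⊆ Q with |O| ≤ k. Suppose S_0 = ∅ and, for i = 0,…,k−1, S_{i+1} = S_i ∪ {e_{i+1}} for some e_{i+1} ∈ Q satisfying f(S_{i+1}) − f(S_i) ≥ (1 − ε) · max_{e ∈ Q} (f(S_i ∪ {e}) − f(S_i)). Then f(S_k) − f(∅) ≥ (1 − (1 − (1−ε)/k)^k) · (f(O) − f(∅)) ≥ (1 − 1/e − ε) · (f(O) − f(∅)). -/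
theorem stmt4 {α : Type*} [DecidableEq α] (Q : Finset α) (f : Finset α → ℝ)
    (hmono : ∀ A B : Finset α, A ⊆ B → B ⊆ Q → f A ≤ f B)
    (hsub : ∀ A B : Finset α, A ⊆ B → B ⊆ Q → ∀ x ∈ Q, x ∉ B →
      f (insert x B) - f B ≤ f (insert x A) - f A)
    (ε : ℝ) (hε0 : 0 < ε) (hε : ε ≤ 1 / 2) (k : ℕ) (hk : 1 ≤ k)
    (O : Finset α) (hOQ : O ⊆ Q) (hOk : O.card ≤ k)
    (S : ℕ → Finset α) (e : ℕ → α) (hS0 : S 0 = ∅)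
    (hstep : ∀ i < k, e (i + 1) ∈ Q ∧ S (i + 1) = insert (e (i + 1)) (S i) ∧
      ∀ e' ∈ Q, (1 - ε) * (f (insert e' (S i)) - f (S i)) ≤ f (S (i + 1)) - f (S i)) :
    (1 - (1 - (1 - ε) / k) ^ k) * (f O - f ∅) ≤ f (S k) - f ∅ ∧
      (1 - 1 / Real.exp 1 - ε) * (f O - f ∅) ≤
        (1 - (1 - (1 - ε) / k) ^ k) * (f O - f ∅) := by
  have hkR : (1:ℝ) ≤ k := by exact_mod_cast hk
  have hk0 : (0:ℝ) < k := by linarith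
  have hO0 : 0 ≤ f O - f ∅ := by linarith [hmono ∅ O (by simp) hOQ]
  have hSQ : ∀ i ≤ k, S i ⊆ Q := by
    intro i
    induction i with
    | zero => intro _; simp [hS0]
    | succ n ih =>
      intro h
      obtain ⟨h1, h2, _⟩ := hstep n (by omega)
      rw [h2]
      exact Finset.insert_subset h1 (ih (by omega))
  have hq0 : (1 - ε) / k ≤ 1 := by
    rw [div_le_one hk0]; linarith
  have hgain : ∀ i < k, (1 - ε) * (f O - f (S i)) ≤ k * (f (S (i + 1)) - f (S i)) := by
    intro i hi
    obtain ⟨h1, h2, h3⟩ := hstep i hi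
    have hSi := hSQ i hi.le
    have hSi1 := hSQ (i + 1) hi
    have hg : 0 ≤ f (S (i + 1)) - f (S i) := by
      have := hmono (S i) (S (i + 1)) (by rw [h2]; exact Finset.subset_insert _ _) hSi1
      linarith
    have key : ∀ T : Finset α, T ⊆ Q →
        (1 - ε) * (f (T ∪ S i) - f (S i)) ≤ T.card * (f (S (i + 1)) - f (S i)) := by
      intro T
      induction T using Finset.induction_on with
      | empty => intro _; simp
      | insert x T hx ih =>
        intro hT
        have hxQ : x ∈ Q := hT (Finset.mem_insert_self _ _)
        have hTQ : T ⊆ Q := (Finset.subset_insert _ _).trans hT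
        have ih' := ih hTQ
        rw [Finset.card_insert_of_notMem hx, Finset.insert_union]
        push_cast
        by_cases hm : x ∈ T ∪ S i
        · rw [Finset.insert_eq_of_mem hm]
          linarith
        · have ha := hsub (S i) (T ∪ S i) Finset.subset_union_right
            (Finset.union_subset hTQ hSi) x hxQ hm
          have hb := h3 x hxQ
          have hc := mul_le_mul_of_nonneg_left ha (by linarith : (0:ℝ) ≤ 1 - ε)
          linarith
    have h4 := key O hOQ
    have h5 := hmono O (O ∪ S i) Finset.subset_union_left (Finset.union_subset hOQ hSi)
    have h6 : (O.card : ℝ) ≤ k := by exact_mod_cast hOk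
    have h7 := mul_le_mul_of_nonneg_right h6 hg
    have h8 := mul_le_mul_of_nonneg_left h5 (by linarith : (0:ℝ) ≤ 1 - ε)
    linarith
  have hrec : ∀ i ≤ k, f O - f (S i) ≤ (1 - (1 - ε) / k) ^ i * (f O - f ∅) := by
    intro i
    induction i with
    | zero => intro _; simp [hS0]
    | succ n ih =>
      intro h
      have h1 := ih (by omega)
      have h2 := hgain n (by omega)
      have h3 : (1 - ε) / k * (f O - f (S n)) ≤ f (S (n + 1)) - f (S n) := by
        rw [div_mul_eq_mul_div, div_le_iff₀ hk0]; linarith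
      have h4 := mul_le_mul_of_nonneg_left h1 (by linarith : (0:ℝ) ≤ 1 - (1 - ε) / k)
      rw [pow_succ]
      linarith
  refine ⟨by linarith [hrec k le_rfl], mul_le_mul_of_nonneg_right ?_ hO0⟩
  have h1 : (1 - (1 - ε) / k) ^ k ≤ Real.exp (-(1 - ε)) :=
    Real.one_sub_div_pow_le_exp_neg (by linarith)
  have h2 : Real.exp (-(1 - ε)) = Real.exp ε / Real.exp 1 := by
    rw [← Real.exp_sub]; congr 1; ring
  have he : 2 ≤ Real.exp 1 := by linarith [Real.add_one_le_exp (1:ℝ)]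
  have h3 : Real.exp ε ≤ 1 + 2 * ε := by
    have ha := Real.add_one_le_exp (-ε)
    have hb : Real.exp (-ε) * Real.exp ε = 1 := by rw [← Real.exp_add]; simp
    have hc := mul_le_mul_of_nonneg_right ha (Real.exp_pos ε).le
    by_contra hcon
    push Not at hcon
    nlinarith [mul_lt_mul_of_pos_left hcon (by linarith : (0:ℝ) < -ε + 1)]
  have h4 : Real.exp ε / Real.exp 1 ≤ 1 / Real.exp 1 + ε := by
    rw [div_add' _ _ _ (Real.exp_pos 1).ne']
    apply div_le_div_of_nonneg_right _ (Real.exp_pos 1).le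
    nlinarith
  linarith
end

section
/- Let S_n be the star with central vertex r and leaves V', let 𝒫 be a path cover of a graph on V' (a set of vertex-disjoint simple paths covering all of V'), and let G = S_n + 𝒫 be the unweighted graph obtained by adding all edges of the paths of 𝒫 to S_n. Let u, v ∈ V' with u ≠ v. If u is an interior vertex of some path of 𝒫 (i.e., u lies on a path of 𝒫 and is not an endpoint of that path), and v lies on a path of 𝒫 having at least one edge, then the effective resistance satisfies R_G(u,v) ≤ 7/6. -/
open Matrix

/-- The star graph `S_n`: the central vertex is `Fin.last n`, joined to the `n`
leaves `0, …, n-1` by unit-weight edges. -/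
def starW (n : ℕ) : Fin (n + 1) → Fin (n + 1) → ℝ :=
  fun i j => if i ≠ j ∧ (i = Fin.last n ∨ j = Fin.last n) then 1 else 0

/-- The star `S_n` plus, for each list `l ∈ Ps` of leaves, the path consisting of
unit-weight edges between consecutive vertices of `l`. -/
def starPlusPaths (n : ℕ) (Ps : List (List (Fin n))) : Fin (n + 1) → Fin (n + 1) → ℝ :=
  fun i j => starW n i j +
    if ∃ a b : Fin n, i = a.castSucc ∧ j = b.castSucc ∧
        ∃ l ∈ Ps, ((a, b) ∈ l.zip l.tail ∨ (b, a) ∈ l.zip l.tail) then 1 else 0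

/-- `Ps` is a path cover of the leaf set: each member is a nonempty duplicate-free
list of leaves, the members are pairwise vertex-disjoint, and every leaf is covered. -/
def IsPathCover (n : ℕ) (Ps : List (List (Fin n))) : Prop :=
  (∀ l ∈ Ps, l ≠ [] ∧ l.Nodup) ∧
    Ps.Pairwise (fun l₁ l₂ => ∀ x ∈ l₁, x ∉ l₂) ∧
    (∀ v : Fin n, ∃ l ∈ Ps, v ∈ l)

lemma quad_ge {V : Type*} [Fintype V] [DecidableEq V] (W : V → V → ℝ)
    (hs : ∀ i j, W i j = W j i) (h0 : ∀ i j, 0 ≤ W i j) (x : V → ℝ) :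
    ∑ i, ∑ j, W i j * (x i - x j) ^ 2 ≤ 2 * (x ⬝ᵥ (lapG W).mulVec x) := by
  have h1 : ∀ i, (lapG W).mulVec x i = (∑ j, W i j * (x i - x j)) + W i i * x i := by
    intro i
    have h2 : ∀ j, lapG W i j * x j
        = (if i = j then (∑ k, W i k) * x i + W i i * x i else 0) - W i j * x j := by
      intro j
      unfold lapG
      split_ifs with h
      · subst h; ring
      · ring
    simp only [mulVec, dotProduct]
    simp_rw [h2]
    rw [Finset.sum_sub_distrib, Finset.sum_ite_eq]
    simp only [Finset.mem_univ, if_true, mul_sub, Finset.sum_sub_distrib, Finset.sum_mul]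
    ring
  have h3 : x ⬝ᵥ (lapG W).mulVec x
      = (∑ i, ∑ j, W i j * (x i * (x i - x j))) + ∑ i, W i i * x i ^ 2 := by
    simp only [dotProduct, h1]
    rw [← Finset.sum_add_distrib]
    refine Finset.sum_congr rfl fun i _ => ?_
    rw [mul_add, Finset.mul_sum]
    congr 1
    · exact Finset.sum_congr rfl fun j _ => by ring
    · ring
  have h4 : ∑ i, ∑ j, W i j * (x i * (x i - x j)) = ∑ i, ∑ j, W i j * (x j * (x j - x i)) := by
    rw [Finset.sum_comm]
    exact Finset.sum_congr rfl fun i _ => Finset.sum_congr rfl fun j _ => by rw [hs]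
  have h5 : ∑ i, ∑ j, W i j * (x i - x j) ^ 2
      = ∑ i, ∑ j, W i j * (x i * (x i - x j)) + ∑ i, ∑ j, W i j * (x j * (x j - x i)) := by
    simp only [← Finset.sum_add_distrib]
    exact Finset.sum_congr rfl fun i _ => Finset.sum_congr rfl fun j _ => by ring
  have h6 : 0 ≤ ∑ i, W i i * x i ^ 2 :=
    Finset.sum_nonneg fun i _ => mul_nonneg (h0 _ _) (sq_nonneg _)
  rw [h5, ← h4, h3]
  linarith

lemma edges_le {V : Type*} [Fintype V] [DecidableEq V] (W : V → V → ℝ)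
    (hs : ∀ i j, W i j = W j i) (h0 : ∀ i j, 0 ≤ W i j) (x : V → ℝ)
    (S : Finset (V × V)) (hS : ∀ p ∈ S, 1 ≤ W p.1 p.2) (hS' : ∀ p ∈ S, p.swap ∉ S) :
    ∑ p ∈ S, (x p.1 - x p.2) ^ 2 ≤ x ⬝ᵥ (lapG W).mulVec x := by
  have h1 := quad_ge W hs h0 x
  rw [← Fintype.sum_prod_type' (fun i j => W i j * (x i - x j) ^ 2)] at h1
  have hd : Disjoint S (S.map (Equiv.prodComm V V).toEmbedding) := by
    rw [Finset.disjoint_left]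
    intro p hp hp2
    rw [Finset.mem_map] at hp2
    obtain ⟨q, hq, rfl⟩ := hp2
    exact hS' q hq hp
  have h2 : ∑ p ∈ S ∪ S.map (Equiv.prodComm V V).toEmbedding, (W p.1 p.2 * (x p.1 - x p.2) ^ 2)
      ≤ ∑ p : V × V, W p.1 p.2 * (x p.1 - x p.2) ^ 2 :=
    Finset.sum_le_sum_of_subset_of_nonneg (Finset.subset_univ _)
      fun p _ _ => mul_nonneg (h0 _ _) (sq_nonneg _)
  rw [Finset.sum_union hd, Finset.sum_map] at h2
  have h3 : ∑ p ∈ S, (x p.1 - x p.2) ^ 2 ≤ ∑ p ∈ S, W p.1 p.2 * (x p.1 - x p.2) ^ 2 :=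
    Finset.sum_le_sum fun p hp => le_mul_of_one_le_left (sq_nonneg _) (hS p hp)
  have h4 : ∑ p ∈ S, (x p.1 - x p.2) ^ 2 ≤
      ∑ p ∈ S, W ((Equiv.prodComm V V).toEmbedding p).1 ((Equiv.prodComm V V).toEmbedding p).2 *
       (x ((Equiv.prodComm V V).toEmbedding p).1 - x ((Equiv.prodComm V V).toEmbedding p).2) ^ 2 := by
    refine Finset.sum_le_sum fun p hp => ?_
    have := le_mul_of_one_le_left (sq_nonneg (x p.1 - x p.2)) (hS p hp)
    simp only [Equiv.coe_toEmbedding, Equiv.prodComm_apply, Prod.fst_swap, Prod.snd_swap]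
    rw [hs p.2 p.1]
    linarith [sq_nonneg (x p.1 - x p.2), show (x p.2 - x p.1) ^ 2 = (x p.1 - x p.2) ^ 2 by ring,
      show W p.1 p.2 * (x p.2 - x p.1) ^ 2 = W p.1 p.2 * (x p.1 - x p.2) ^ 2 by ring]
  linarith

lemma zip_tail_mem {α : Type*} (l : List α) (i : ℕ) (h : i + 1 < l.length) :
    (l[i], l[i+1]) ∈ l.zip l.tail := by
  rw [List.mem_iff_getElem]
  refine ⟨i, by simp; omega, by simp⟩

lemma nb_interior {α : Type*} (l : List α) (hn : l.Nodup) (hl : l ≠ []) (u : α) (hu : u ∈ l)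
    (h1 : u ≠ l.head hl) (h2 : u ≠ l.getLast hl) :
    ∃ a b, a ≠ b ∧ a ≠ u ∧ b ≠ u ∧ (a, u) ∈ l.zip l.tail ∧ (u, b) ∈ l.zip l.tail := by
  obtain ⟨i, hi, rfl⟩ := List.mem_iff_getElem.1 hu
  have hi0 : i ≠ 0 := by
    rintro rfl
    exact h1 (by rw [List.head_eq_getElem])
  have hi1 : i ≠ l.length - 1 := by
    intro h
    apply h2
    rw [List.getLast_eq_getElem]
    simp only [h]
  obtain ⟨k, rfl⟩ := Nat.exists_eq_succ_of_ne_zero hi0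
  refine ⟨l[k], l[k+2]'(by omega), ?_, ?_, ?_, zip_tail_mem l k hi,
    zip_tail_mem l (k+1) (by omega)⟩ <;>
  · rw [Ne, hn.getElem_inj_iff]; omega

lemma nb_any {α : Type*} (l : List α) (hn : l.Nodup) (hl : 2 ≤ l.length) (v : α) (hv : v ∈ l) :
    ∃ c, c ≠ v ∧ ((v, c) ∈ l.zip l.tail ∨ (c, v) ∈ l.zip l.tail) := by
  obtain ⟨i, hi, rfl⟩ := List.mem_iff_getElem.1 hv
  by_cases h : i + 1 < l.length
  · refine ⟨l[i+1], ?_, Or.inl (zip_tail_mem l i h)⟩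
    rw [Ne, hn.getElem_inj_iff]; omega
  · obtain ⟨k, rfl⟩ := Nat.exists_eq_succ_of_ne_zero (show i ≠ 0 by omega)
    refine ⟨l[k], ?_, Or.inr (zip_tail_mem l k hi)⟩
    rw [Ne, hn.getElem_inj_iff]; omega

theorem stmt7 (n : ℕ) (Ps : List (List (Fin n))) (hPs : IsPathCover n Ps)
    (u v : Fin n) (huv : u ≠ v)
    (hu : ∃ p ∈ Ps, ∃ hp : p ≠ [], u ∈ p ∧ u ≠ p.head hp ∧ u ≠ p.getLast hp)
    (hv : ∃ q ∈ Ps, v ∈ q ∧ 2 ≤ q.length)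
    (x : Fin (n + 1) → ℝ)
    (hx : (lapG (starPlusPaths n Ps)).mulVec x =
      Pi.single u.castSucc 1 - Pi.single v.castSucc 1) :
    (Pi.single u.castSucc 1 - Pi.single v.castSucc 1) ⬝ᵥ x ≤ 7 / 6 := by
  set W := starPlusPaths n Ps with hW
  have hs : ∀ i j, W i j = W j i := by
    intro i j
    simp only [hW, starPlusPaths, starW]
    congr 1
    · refine if_congr ?_ rfl rfl
      rw [ne_comm, or_comm]
    · refine if_congr ?_ rfl rfl
      constructor <;>
      · rintro ⟨a, b, h1, h2, l, hl, h⟩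
        exact ⟨b, a, h2, h1, l, hl, h.symm⟩
  have h0 : ∀ i j, 0 ≤ W i j := by
    intro i j
    simp only [hW, starPlusPaths, starW]
    split_ifs <;> norm_num
  have hr : ∀ a : Fin n, 1 ≤ W a.castSucc (Fin.last n) := by
    intro a
    simp only [hW, starPlusPaths, starW]
    rw [if_pos ⟨(Fin.castSucc_lt_last a).ne, by simp⟩]
    split_ifs <;> norm_num
  have he : ∀ a b : Fin n, (∃ l ∈ Ps, ((a, b) ∈ l.zip l.tail ∨ (b, a) ∈ l.zip l.tail)) →
      1 ≤ W a.castSucc b.castSucc := by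
    intro a b h
    simp only [hW, starPlusPaths, starW]
    rw [if_pos (c := ∃ a' b' : Fin n, _) ⟨a, b, rfl, rfl, h⟩]
    split_ifs <;> norm_num
  obtain ⟨p, hp, hpn, hup, hu1, hu2⟩ := hu
  obtain ⟨q, hq, hvq, hq2⟩ := hv
  obtain ⟨a, b, hab, hau, hbu, ha, hb⟩ := nb_interior p (hPs.1 p hp).2 hpn u hup hu1 hu2
  obtain ⟨c, hcv, hc⟩ := nb_any q (hPs.1 q hq).2 hq2 v hvq
  have hua : 1 ≤ W u.castSucc a.castSucc := he _ _ ⟨p, hp, Or.inr ha⟩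
  have hub : 1 ≤ W u.castSucc b.castSucc := he _ _ ⟨p, hp, Or.inl hb⟩
  have hvc : 1 ≤ W v.castSucc c.castSucc := he _ _ ⟨q, hq, hc⟩
  clear_value W
  have hE := edges_le W hs h0 x
  rw [hx, dotProduct_comm] at hE
  have hR : (Pi.single u.castSucc 1 - Pi.single v.castSucc 1) ⬝ᵥ x
      = x u.castSucc - x v.castSucc := by
    rw [sub_dotProduct]; simp
  rw [hR] at hE ⊢
  have hl : ∀ a : Fin n, a.castSucc ≠ Fin.last n := fun a => (Fin.castSucc_lt_last a).ne
  have hl' : ∀ a : Fin n, Fin.last n ≠ a.castSucc := fun a => (Fin.castSucc_lt_last a).ne'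
  -- adjacency of `u` and `v`
  have adj : 1 ≤ W u.castSucc v.castSucc → x u.castSucc - x v.castSucc ≤ 7 / 6 := by
    intro h
    have := hE {(u.castSucc, v.castSucc)} (by simpa using h) (by simp [huv])
    simp only [Finset.sum_singleton] at this
    nlinarith
  -- a common neighbour
  have com : ∀ c : Fin n, c ≠ u → c ≠ v → 1 ≤ W u.castSucc c.castSucc →
      1 ≤ W v.castSucc c.castSucc → x u.castSucc - x v.castSucc ≤ 7 / 6 := by
    intro c hcu hcv h1 h2
    have := hE {(u.castSucc, c.castSucc), (v.castSucc, c.castSucc),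
      (u.castSucc, Fin.last n), (v.castSucc, Fin.last n)}
      (by simp [h1, h2, hr]) (by simp [huv, huv.symm, hcu, hcv, hcu.symm, hcv.symm, hl, hl'])
    simp [huv, huv.symm, hcu, hcv, hcu.symm, hcv.symm, hl, hl'] at this
    nlinarith [sq_nonneg (x u.castSucc + x v.castSucc - 2 * x c.castSucc),
      sq_nonneg (x u.castSucc + x v.castSucc - 2 * x (Fin.last n))]
  by_cases hav : a = v
  · subst hav; exact adj hua
  by_cases hbv : b = v
  · subst hbv; exact adj hub
  by_cases hcu : c = u
  · subst hcu; exact adj (hs _ _ ▸ hvc)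
  by_cases hca : c = a
  · subst hca; exact com c hcu hcv hua hvc
  by_cases hcb : c = b
  · subst hcb; exact com c hcu hcv hub hvc
  have := hE {(u.castSucc, a.castSucc), (u.castSucc, b.castSucc), (v.castSucc, c.castSucc),
      (u.castSucc, Fin.last n), (v.castSucc, Fin.last n), (a.castSucc, Fin.last n),
      (b.castSucc, Fin.last n), (c.castSucc, Fin.last n)}
      (by simp [hua, hub, hvc, hr])
      (by simp [hl, hl', huv, Ne.symm huv, hab, Ne.symm hab, hau, Ne.symm hau, hbu, Ne.symm hbu,
        hcv, Ne.symm hcv, hav, Ne.symm hav, hbv, Ne.symm hbv, hcu, Ne.symm hcu, hca, Ne.symm hca,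
        hcb, Ne.symm hcb])
  simp [hl, hl', huv, Ne.symm huv, hab, Ne.symm hab, hau, Ne.symm hau, hbu, Ne.symm hbu,
        hcv, Ne.symm hcv, hav, Ne.symm hav, hbv, Ne.symm hbv, hcu, Ne.symm hcu, hca, Ne.symm hca,
        hcb, Ne.symm hcb] at this
  generalize x u.castSucc = U at *
  generalize x v.castSucc = V at *
  generalize x a.castSucc = A at *
  generalize x b.castSucc = B at *
  generalize x c.castSucc = C at *
  generalize x (Fin.last n) = R at *
  have k1 : 2 * (U - R) ^ 2 + 3 / 2 * (V - R) ^ 2 ≤ U - V := by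
    nlinarith [sq_nonneg (U + R - 2 * A), sq_nonneg (U + R - 2 * B), sq_nonneg (V + R - 2 * C)]
  have k2 : 6 / 7 * (U - V) ^ 2 ≤ U - V := by
    nlinarith [sq_nonneg (4 * (U - R) + 3 * (V - R))]
  nlinarith
end

section
/- Let S_n be the star with central vertex r and leaves V', let 𝒫 be a path cover of a graph on V' (a set of vertex-disjoint simple paths covering all of V'), and let G = S_n + 𝒫 be the unweighted graph obtained by adding all edges of the paths of 𝒫 to S_n. Let u, v ∈ V' with u ≠ v. If u is an interior vertex of some path of 𝒫 (i.e., u lies on a path of 𝒫 and is not an endpoint of that path), and v is an isolated vertex of 𝒫 (a path of length 0), then the effective resistance satisfies R_G(u,v) ≤ 3/2. -/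
open Matrix

lemma mem_zip_tail_aux {α : Type*} (s : List α) (a b : α) (t : List α) :
    (a, b) ∈ (s ++ a :: b :: t).zip (s ++ a :: b :: t).tail := by
  induction s with
  | nil => simp
  | cons c s ih =>
    cases s with
    | nil => simp
    | cons d s =>
      simp only [List.cons_append, List.tail_cons, List.zip_cons_cons, List.mem_cons] at ih ⊢
      exact Or.inr ih

lemma zip_tail_ne_aux {α : Type*} (l : List α) (hl : l.Nodup) (a : α) :
    (a, a) ∉ l.zip l.tail := by
  induction l with
  | nil => simp
  | cons c s ih =>
    cases s with
    | nil => simp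
    | cons d s =>
      intro h
      simp only [List.tail_cons, List.zip_cons_cons, List.mem_cons, Prod.mk.injEq] at h
      rcases h with ⟨h1, h2⟩ | h
      · subst h1; subst h2; simp at hl
      · exact ih (List.nodup_cons.mp hl).2 (by simpa using h)

lemma cover_unique_aux {n : ℕ} {Ps : List (List (Fin n))} (h : IsPathCover n Ps)
    {l m : List (Fin n)} (hl : l ∈ Ps) (hm : m ∈ Ps) {y : Fin n} (hyl : y ∈ l) (hym : y ∈ m) :
    l = m := by
  by_contra hne
  have hs : Std.Symm (fun l₁ l₂ : List (Fin n) => ∀ x ∈ l₁, x ∉ l₂) :=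
    ⟨fun l₁ l₂ h x hx hx' => h x hx' hx⟩
  exact h.2.1.forall hl hm hne y hyl hym

lemma lap_mulVec_aux {V : Type*} [Fintype V] [DecidableEq V] (W : V → V → ℝ)
    (h0 : ∀ i, W i i = 0) (x : V → ℝ) (i : V) :
    (lapG W).mulVec x i = ∑ k, W i k * (x i - x k) := by
  have : ∀ k, lapG W i k * x k = (if i = k then (∑ j, W i j) * x i else 0) - W i k * x k := by
    intro k
    unfold lapG
    split_ifs with h
    · subst h; simp [h0]
    · ring
  simp only [Matrix.mulVec, dotProduct, this, Finset.sum_sub_distrib, mul_sub]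
  simp [Finset.sum_mul]

lemma energy_aux {V : Type*} [Fintype V] (W : V → V → ℝ)
    (hs : ∀ i j, W i j = W j i) (x : V → ℝ) :
    2 * ∑ i, x i * ∑ k, W i k * (x i - x k) = ∑ i, ∑ k, W i k * (x i - x k) ^ 2 := by
  have h1 : ∑ i, x i * ∑ k, W i k * (x i - x k) = ∑ i, ∑ k, x i * (W i k * (x i - x k)) := by
    simp only [Finset.mul_sum]
  have h2 : ∑ i, ∑ k, x i * (W i k * (x i - x k)) = ∑ i, ∑ k, x k * (W i k * (x k - x i)) := by
    rw [Finset.sum_comm]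
    refine Finset.sum_congr rfl fun i _ => Finset.sum_congr rfl fun k _ => ?_
    rw [hs k i]
  rw [two_mul, h1]
  nth_rewrite 2 [h2]
  simp only [← Finset.sum_add_distrib]
  refine Finset.sum_congr rfl fun i _ => Finset.sum_congr rfl fun k _ => ?_
  ring

lemma energy_lower_aux {V : Type*} [Fintype V] [DecidableEq V] (W : V → V → ℝ) (x : V → ℝ)
    (htn : ∀ i k, 0 ≤ W i k * (x i - x k) ^ 2) (r u v a b : V)
    (e1 : u ≠ r) (e2 : v ≠ r) (e3 : a ≠ r) (e4 : b ≠ r) (f1 : a ≠ u) (f2 : a ≠ b) (f3 : u ≠ b)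
    (f4 : a ≠ v) (f5 : b ≠ v) (f6 : u ≠ v) :
    W v r * (x v - x r) ^ 2 + (W r v * (x r - x v) ^ 2 + (W u r * (x u - x r) ^ 2 +
      (W r u * (x r - x u) ^ 2 + (W a r * (x a - x r) ^ 2 + (W r a * (x r - x a) ^ 2 +
      (W b r * (x b - x r) ^ 2 + (W r b * (x r - x b) ^ 2 + (W a u * (x a - x u) ^ 2 +
      (W u a * (x u - x a) ^ 2 + (W u b * (x u - x b) ^ 2 +
      W b u * (x b - x u) ^ 2)))))))))) ≤ ∑ i, ∑ k, W i k * (x i - x k) ^ 2 := by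
  have hS : ∑ q ∈ ({(v, r), (r, v), (u, r), (r, u), (a, r), (r, a), (b, r), (r, b), (a, u),
      (u, a), (u, b), (b, u)} : Finset (V × V)), W q.1 q.2 * (x q.1 - x q.2) ^ 2 ≤
      ∑ i, ∑ k, W i k * (x i - x k) ^ 2 := by
    rw [← Fintype.sum_prod_type' (f := fun i k => W i k * (x i - x k) ^ 2)]
    exact Finset.sum_le_univ_sum_of_nonneg fun q => htn q.1 q.2
  refine le_trans (le_of_eq ?_) hS
  clear hS htn
  repeat rw [Finset.sum_insert (by
    simp only [Finset.mem_insert, Finset.mem_singleton, Prod.mk.injEq]; grind)]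
  rw [Finset.sum_singleton]

theorem stmt8 (n : ℕ) (Ps : List (List (Fin n))) (hPs : IsPathCover n Ps)
    (u v : Fin n) (huv : u ≠ v)
    (hu : ∃ p ∈ Ps, ∃ hp : p ≠ [], u ∈ p ∧ u ≠ p.head hp ∧ u ≠ p.getLast hp)
    (hv : [v] ∈ Ps)
    (x : Fin (n + 1) → ℝ)
    (hx : (lapG (starPlusPaths n Ps)).mulVec x =
      Pi.single u.castSucc 1 - Pi.single v.castSucc 1) :
    (Pi.single u.castSucc 1 - Pi.single v.castSucc 1) ⬝ᵥ x ≤ 3 / 2 := by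
  obtain ⟨p, hpP, hp, hup, hh, hl⟩ := hu
  obtain ⟨s, t, hst⟩ := List.append_of_mem hup
  obtain ⟨s', a, b, t', hform⟩ : ∃ s' a b t', p = s' ++ a :: u :: b :: t' := by
    rcases List.eq_nil_or_concat s with h | ⟨s', a, h⟩
    · subst h; subst hst; simp at hh
    · cases t with
      | nil => subst hst; simp at hl
      | cons b t' => exact ⟨s', a, b, t', by subst hst; subst h; simp⟩
  have hnd := (hPs.1 p hpP).2
  have hau : (a, u) ∈ p.zip p.tail := hform ▸ mem_zip_tail_aux s' a u (b :: t')
  have hub : (u, b) ∈ p.zip p.tail := by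
    have := mem_zip_tail_aux (s' ++ [a]) u b t'
    rw [hform]; simpa using this
  have hne : a ≠ u ∧ a ≠ b ∧ u ≠ b := by
    rw [hform] at hnd
    have := (List.nodup_append.mp hnd).2.1
    simp at this
    tauto
  have hvp : v ∉ p := by
    intro h
    have := cover_unique_aux hPs hpP hv h (by simp)
    rw [this] at hup
    simp at hup; exact huv hup
  have hva : a ≠ v := by rintro rfl; exact hvp (by simp [hform])
  have hvb : b ≠ v := by rintro rfl; exact hvp (by simp [hform])
  set W := starPlusPaths n Ps with hW
  have hsym : ∀ i j, W i j = W j i := by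
    intro i j
    simp only [hW, starPlusPaths, starW]
    congr 1
    · refine if_congr ?_ rfl rfl
      constructor <;> rintro ⟨h1, h2⟩ <;> exact ⟨h1.symm, h2.symm⟩
    · refine if_congr ?_ rfl rfl
      constructor <;> rintro ⟨c, d, h1, h2, l, hl, h3⟩ <;> exact ⟨d, c, h2, h1, l, hl, h3.symm⟩
  have h0 : ∀ i, W i i = 0 := by
    intro i
    simp only [hW, starPlusPaths, starW]
    rw [if_neg (by simp), if_neg, add_zero]
    rintro ⟨c, d, h1, h2, l, hl, h3⟩
    have : c = d := Fin.castSucc_injective n (h1.symm.trans h2)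
    subst this
    exact zip_tail_ne_aux l (hPs.1 l hl).2 c (by tauto)
  have hnn : ∀ i j, 0 ≤ W i j := by
    intro i j
    simp only [hW, starPlusPaths, starW]
    split_ifs <;> norm_num
  have hstar : ∀ c : Fin n, 1 ≤ W c.castSucc (Fin.last n) := by
    intro c
    simp only [hW, starPlusPaths, starW]
    rw [if_pos (by simp [(Fin.castSucc_lt_last c).ne])]
    split_ifs <;> norm_num
  have hpath : ∀ c d : Fin n, (c, d) ∈ p.zip p.tail → 1 ≤ W c.castSucc d.castSucc := by
    intro c d h
    simp only [hW, starPlusPaths, starW]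
    rw [if_pos (c := ∃ _, _) ⟨c, d, rfl, rfl, p, hpP, Or.inl h⟩]
    split_ifs <;> norm_num
  have hvl : W v.castSucc (Fin.last n) = 1 := by
    simp only [hW, starPlusPaths, starW]
    rw [if_pos (by simp [(Fin.castSucc_lt_last v).ne]), if_neg, add_zero]
    rintro ⟨c, d, h1, h2, _⟩
    exact (Fin.castSucc_lt_last d).ne h2.symm
  have hvo : ∀ k, k ≠ Fin.last n → W v.castSucc k = 0 := by
    intro k hk
    simp only [hW, starPlusPaths, starW]
    rw [if_neg, if_neg, add_zero]
    · rintro ⟨c, d, h1, h2, l, hl, h3⟩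
      have hc : v = c := Fin.castSucc_injective n h1
      subst hc
      have hvml : v ∈ l := by
        rcases h3 with h3 | h3
        · exact (List.of_mem_zip h3).1
        · exact List.mem_of_mem_tail (List.of_mem_zip h3).2
      have := cover_unique_aux hPs hl hv hvml (by simp)
      subst this
      simp at h3
    · rintro ⟨_, h | h⟩
      · exact (Fin.castSucc_lt_last v).ne h
      · exact hk h
  have hrow : ∀ i, ∑ k, W i k * (x i - x k) =
      (Pi.single u.castSucc 1 - Pi.single v.castSucc 1 : Fin (n+1) → ℝ) i := by
    intro i
    rw [← lap_mulVec_aux W h0, hx]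
  have huv' : u.castSucc ≠ v.castSucc := fun h => huv (Fin.castSucc_injective n h)
  have hrv := hrow v.castSucc
  rw [Finset.sum_eq_single (Fin.last n) (fun k _ hk => by rw [hvo k hk, zero_mul]) (by simp), hvl]
    at hrv
  simp [huv'.symm] at hrv
  have hR : (Pi.single u.castSucc 1 - Pi.single v.castSucc 1 : Fin (n+1) → ℝ) ⬝ᵥ x
      = x u.castSucc - x v.castSucc := by
    simp [sub_dotProduct]
  have hE := energy_aux W hsym x
  simp only [hrow] at hE
  have hE2 : ∑ i, x i * (Pi.single u.castSucc 1 - Pi.single v.castSucc 1 : Fin (n+1) → ℝ) i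
      = x u.castSucc - x v.castSucc := by
    rw [← hR, dotProduct_comm]; rfl
  rw [hE2] at hE
  rw [hR]
  have cs : ∀ c d : Fin n, c ≠ d → c.castSucc ≠ d.castSucc :=
    fun c d h h' => h (Fin.castSucc_injective n h')
  have cl : ∀ c : Fin n, c.castSucc ≠ Fin.last n := fun c => (Fin.castSucc_lt_last c).ne
  have htn : ∀ i k, 0 ≤ W i k * (x i - x k) ^ 2 := fun i k => mul_nonneg (hnn i k) (sq_nonneg _)
  have hge : ∀ i k, 1 ≤ W i k → (x i - x k) ^ 2 ≤ W i k * (x i - x k) ^ 2 :=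
    fun i k h => le_mul_of_one_le_left (sq_nonneg _) h
  have hge' : ∀ i k, 1 ≤ W i k → (x i - x k) ^ 2 ≤ W k i * (x k - x i) ^ 2 := by
    intro i k h
    rw [hsym k i, sub_sq_comm (x k)]; exact hge i k h
  obtain ⟨n1, n2, n3⟩ := hne
  have e1 := cl u
  have e2 := cl v
  have e3 := cl a
  have e4 := cl b
  have f1 := cs _ _ n1
  have f2 := cs _ _ n2
  have f3 := cs _ _ n3
  have f4 := cs _ _ hva
  have f5 := cs _ _ hvb
  have g1 := hge _ _ (hstar v)
  have g2 := hge _ _ (hstar u)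
  have g3 := hge _ _ (hstar a)
  have g4 := hge _ _ (hstar b)
  have g5 := hge _ _ (hpath _ _ hau)
  have g6 := hge _ _ (hpath _ _ hub)
  have k1 := hge' _ _ (hstar v)
  have k2 := hge' _ _ (hstar u)
  have k3 := hge' _ _ (hstar a)
  have k4 := hge' _ _ (hstar b)
  have k5 := hge' _ _ (hpath _ _ hau)
  have k6 := hge' _ _ (hpath _ _ hub)
  have hS := energy_lower_aux W x htn (Fin.last n) u.castSucc v.castSucc a.castSucc b.castSucc
    e1 e2 e3 e4 f1 f2 f3 f4 f5 huv'
  have hyv : x v.castSucc = x (Fin.last n) - 1 := by linarith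
  have key : (x v.castSucc - x (Fin.last n)) ^ 2 + (x u.castSucc - x (Fin.last n)) ^ 2 + (x a.castSucc - x (Fin.last n)) ^ 2 + (x b.castSucc - x (Fin.last n)) ^ 2
      + (x a.castSucc - x u.castSucc) ^ 2 + (x u.castSucc - x b.castSucc) ^ 2 ≤ x u.castSucc - x v.castSucc := by linarith
  rw [hyv] at key ⊢
  generalize x (Fin.last n) = R at *
  generalize x u.castSucc = U at *
  generalize x a.castSucc = A at *
  generalize x b.castSucc = B at *
  nlinarith [sq_nonneg (2 * (A - R) - (U - R)), sq_nonneg (2 * (B - R) - (U - R)),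
    sq_nonneg (U - R - 1 / 2)]
end

section
/- Let S_n be the star with central vertex r and leaves V', let 𝒫 be a path cover of a graph on V' (a set of vertex-disjoint simple paths covering all of V'), and let G = S_n + 𝒫 be the unweighted graph obtained by adding all edges of the paths of 𝒫 to S_n. If u and v are the two (distinct) endpoints of the same path of 𝒫, then the effective resistance satisfies R_G(u,v) < √5 − 1. -/
open Matrix

lemma geo_aux (f : ℕ → ℝ) (m : ℕ) (l : ℝ) (hl : l * l = 3 * l - 1)
    (h : ∀ i < m, 3 * f (i + 1) = f i + f (i + 2)) :
    ∀ i ≤ m, f (i + 1) - l * f i = (3 - l) ^ i * (f 1 - l * f 0) := by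
  intro i
  induction i with
  | zero => intro _; simp
  | succ i ih =>
    intro hi
    have h1 := ih (by omega)
    have h2 := h i (by omega)
    rw [pow_succ]
    have : f (i + 1 + 1) - l * f (i + 1) = (3 - l) * (f (i + 1) - l * f i) := by
      linear_combination (-1 : ℝ) * h2 - f i * hl
    rw [this, h1]; ring

lemma path_aux (f : ℕ → ℝ) (m : ℕ) (h0 : 2 * f 0 - f 1 = 1)
    (h : ∀ i < m, 3 * f (i + 1) = f i + f (i + 2))
    (h1 : 2 * f (m + 1) - f m = -1) : f 0 - f (m + 1) < Real.sqrt 5 - 1 := by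
  have hs : Real.sqrt 5 * Real.sqrt 5 = 5 := Real.mul_self_sqrt (by norm_num)
  have hs2 : 2 < Real.sqrt 5 := by
    apply Real.lt_sqrt_of_sq_lt; norm_num
  have hs3 : Real.sqrt 5 < 3 := by
    rw [Real.sqrt_lt' (by norm_num)]; norm_num
  set s := Real.sqrt 5
  obtain ⟨l, hl⟩ : ∃ l : ℝ, l = (3 - s) / 2 := ⟨_, rfl⟩
  have hll : l * l = 3 * l - 1 := by rw [hl]; linear_combination (1 / 4 : ℝ) * hs
  have A := geo_aux f m l hll h m le_rfl
  have B := geo_aux (fun i => f (m + 1 - i)) m l hll (by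
    intro i hi
    obtain ⟨j, rfl⟩ : ∃ j, m = i + 1 + j := ⟨m - (i + 1), by omega⟩
    have := h j (by omega)
    have e1 : i + 1 + j + 1 - (i + 1) = j + 1 := by omega
    have e2 : i + 1 + j + 1 - i = j + 2 := by omega
    have e3 : i + 1 + j + 1 - (i + 2) = j := by omega
    simp only [e1, e2, e3]
    linarith) m le_rfl
  simp only [Nat.sub_self, Nat.add_sub_cancel, Nat.sub_zero, Nat.add_sub_cancel_left] at B
  by_contra hc
  push Not at hc
  have hp : 0 < (3 - l) ^ m := by
    apply pow_pos; rw [hl]; linarith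
  have C : (2 * l - 1) * (f 0 - f (m + 1)) - 2 * l
      = (3 - l) ^ m * ((2 - l) * (f 0 - f (m + 1)) - 2) := by
    have e1 : f 1 = 2 * f 0 - 1 := by linarith
    have e2 : f m = 2 * f (m + 1) + 1 := by linarith
    rw [e1, e2] at A
    rw [e1, e2] at B
    linear_combination A - B
  have D : 0 ≤ (2 - l) * (f 0 - f (m + 1)) - 2 := by
    rw [hl]; nlinarith
  have E := mul_nonneg hp.le D
  rw [← C, hl] at E
  nlinarith

/-- adjacency of leaves in the path cover -/
def PAdj {n : ℕ} (Ps : List (List (Fin n))) (a b : Fin n) : Prop :=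
  ∃ l ∈ Ps, ((a, b) ∈ l.zip l.tail ∨ (b, a) ∈ l.zip l.tail)

lemma mem_zip_tail {α : Type*} (l : List α) (a b : α) :
    (a, b) ∈ l.zip l.tail ↔ ∃ i, ∃ h : i + 1 < l.length, a = l[i] ∧ b = l[i + 1] := by
  rw [List.mem_iff_getElem]
  constructor
  · rintro ⟨i, hi, h⟩
    simp only [List.length_zip, List.length_tail, List.getElem_zip, List.getElem_tail,
      Prod.mk.injEq] at hi h
    exact ⟨i, by omega, h.1.symm, h.2.symm⟩
  · rintro ⟨i, hi, h1, h2⟩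
    refine ⟨i, by simp; omega, ?_⟩
    simp [List.getElem_zip, List.getElem_tail, h1, h2]

lemma unique_path {n : ℕ} {Ps : List (List (Fin n))} (hPs : IsPathCover n Ps)
    {l p : List (Fin n)} (hl : l ∈ Ps) (hp : p ∈ Ps) {a : Fin n} (h1 : a ∈ l) (h2 : a ∈ p) :
    l = p := by
  by_contra hne
  have hsym : ∀ ⦃l₁ l₂ : List (Fin n)⦄, (∀ x ∈ l₁, x ∉ l₂) → (∀ x ∈ l₂, x ∉ l₁) :=
    fun _ _ h x hx hx' => h x hx' hx
  have q1 : Ps.Pairwise (fun l₁ l₂ => l₁ ≠ l₂ → ∀ x ∈ l₁, x ∉ l₂) := by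
    refine hPs.2.1.imp ?_
    intro l₁ l₂ h _
    exact h
  have q2 : Ps.Pairwise (flip (fun l₁ l₂ => l₁ ≠ l₂ → ∀ x ∈ l₁, x ∉ l₂)) := by
    refine hPs.2.1.imp ?_
    intro l₁ l₂ h _
    exact hsym h
  have := List.Pairwise.forall_of_forall_of_flip (fun x _ h => absurd rfl h) q1 q2 hl hp hne a h1
  exact this h2

lemma padj_iff {n : ℕ} {Ps : List (List (Fin n))} (hPs : IsPathCover n Ps)
    {p : List (Fin n)} (hp : p ∈ Ps) (i : ℕ) (hi : i < p.length) (b : Fin n) :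
    PAdj Ps p[i] b ↔ (∃ h : i + 1 < p.length, b = p[i + 1]) ∨
      (∃ j, ∃ h : j + 1 = i, b = p[j]) := by
  have hnd := (hPs.1 p hp).2
  constructor
  · rintro ⟨l, hl, h | h⟩
    · rw [mem_zip_tail] at h
      obtain ⟨j, hj, h1, h2⟩ := h
      have : l = p := unique_path hPs hl hp (a := p[i]) (by rw [h1]; exact List.getElem_mem _)
        (List.getElem_mem _)
      subst this
      have := (hnd.getElem_inj_iff).1 h1
      subst this
      exact Or.inl ⟨hj, h2⟩
    · rw [mem_zip_tail] at h
      obtain ⟨j, hj, h1, h2⟩ := h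
      have : l = p := unique_path hPs hl hp (a := p[i]) (by rw [h2]; exact List.getElem_mem _)
        (List.getElem_mem _)
      subst this
      have := (hnd.getElem_inj_iff).1 h2
      subst this
      exact Or.inr ⟨j, rfl, h1⟩
  · rintro (⟨h, rfl⟩ | ⟨j, rfl, rfl⟩)
    · exact ⟨p, hp, Or.inl ((mem_zip_tail _ _ _).2 ⟨i, h, rfl, rfl⟩)⟩
    · exact ⟨p, hp, Or.inr ((mem_zip_tail _ _ _).2 ⟨j, hi, rfl, rfl⟩)⟩

lemma lap_row {V : Type*} [Fintype V] [DecidableEq V] (W : V → V → ℝ) (hW : ∀ i, W i i = 0)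
    (x : V → ℝ) (i : V) : (lapG W).mulVec x i = ∑ j, W i j * (x i - x j) := by
  have : ∀ j, lapG W i j * x j = (if i = j then (∑ k, W i k) * x i else 0) - W i j * x j := by
    intro j
    unfold lapG
    split_ifs with h
    · subst h; rw [hW]; ring
    · ring
  simp only [Matrix.mulVec, dotProduct, this, Finset.sum_sub_distrib, mul_sub]
  simp [Finset.sum_mul]

open Classical in
lemma leaf_row {n : ℕ} {Ps : List (List (Fin n))} (hPs : IsPathCover n Ps)
    (x : Fin (n + 1) → ℝ) (a : Fin n) :
    (lapG (starPlusPaths n Ps)).mulVec x a.castSucc =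
      (x a.castSucc - x (Fin.last n)) +
        ∑ b : Fin n, if PAdj Ps a b then x a.castSucc - x b.castSucc else 0 := by
  rw [lap_row, Fin.sum_univ_castSucc, add_comm]
  · congr 1
    · have h2 : ¬ ∃ a' b : Fin n, a.castSucc = a'.castSucc ∧ Fin.last n = b.castSucc ∧
        ∃ l ∈ Ps, ((a', b) ∈ l.zip l.tail ∨ (b, a') ∈ l.zip l.tail) := by
        rintro ⟨a', b, -, h, -⟩
        exact (Fin.castSucc_lt_last b).ne h.symm
      have h1 : a.castSucc ≠ Fin.last n := (Fin.castSucc_lt_last a).ne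
      simp only [starPlusPaths, starW]
      rw [if_pos (by simp [h1]), if_neg h2]
      ring
    · apply Finset.sum_congr rfl
      intro b _
      have h1 : a.castSucc ≠ Fin.last n := (Fin.castSucc_lt_last a).ne
      have h2 : b.castSucc ≠ Fin.last n := (Fin.castSucc_lt_last b).ne
      have e : (∃ a' b' : Fin n, a.castSucc = a'.castSucc ∧ b.castSucc = b'.castSucc ∧
        ∃ l ∈ Ps, ((a', b') ∈ l.zip l.tail ∨ (b', a') ∈ l.zip l.tail)) ↔ PAdj Ps a b := by
        constructor
        · rintro ⟨a', b', ha, hb, h⟩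
          rw [Fin.castSucc_inj] at ha hb
          subst ha; subst hb; exact h
        · intro h; exact ⟨a, b, rfl, rfl, h⟩
      simp only [starPlusPaths, starW]
      rw [if_neg (by tauto)]
      by_cases h : PAdj Ps a b
      · rw [if_pos (e.2 h), if_pos h]; ring
      · rw [if_neg (fun h' => h (e.1 h')), if_neg h]; ring
  · intro i
    simp only [starPlusPaths, starW]
    rw [if_neg (by tauto), if_neg, add_zero]
    rintro ⟨a', b', ha, hb, l, hl, h⟩
    have : a' = b' := Fin.castSucc_injective _ (ha.symm.trans hb)
    subst this
    have hnd := (hPs.1 l hl).2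
    rw [or_self, mem_zip_tail] at h
    obtain ⟨j, hj, h1, h2⟩ := h
    have := (hnd.getElem_inj_iff).1 (h1.symm.trans h2)
    omega

theorem stmt9 (n : ℕ) (Ps : List (List (Fin n))) (hPs : IsPathCover n Ps)
    (u v : Fin n) (huv : u ≠ v)
    (huv' : ∃ p ∈ Ps, ∃ hp : p ≠ [], u = p.head hp ∧ v = p.getLast hp)
    (x : Fin (n + 1) → ℝ)
    (hx : (lapG (starPlusPaths n Ps)).mulVec x =
      Pi.single u.castSucc 1 - Pi.single v.castSucc 1) :
    (Pi.single u.castSucc 1 - Pi.single v.castSucc 1) ⬝ᵥ x < Real.sqrt 5 - 1 := by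
  classical
  obtain ⟨p, hp, hne, hu, hv⟩ := huv'
  have hnd := (hPs.1 p hp).2
  have hlen : 2 ≤ p.length := by
    rcases p with _ | ⟨a, _ | ⟨b, t⟩⟩
    · exact absurd rfl hne
    · exact absurd (by rw [hu, hv]; rfl) huv
    · simp
  obtain ⟨m, hm⟩ : ∃ m, p.length = m + 2 := ⟨p.length - 2, by omega⟩
  have hu0 : u = p[0] := by rw [hu, List.head_eq_getElem]
  have hv0 : v = p[m + 1] := by
    rw [hv, List.getLast_eq_getElem]; congr 1; omega
  -- the potential along the path
  let f : ℕ → ℝ := fun i => if h : i < p.length then x (p[i]).castSucc - x (Fin.last n) else 0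
  have hf : ∀ i (h : i < p.length), f i = x (p[i]).castSucc - x (Fin.last n) :=
    fun i h => dif_pos h
  have row : ∀ i (h : i < p.length), f i + (∑ b : Fin n,
      if PAdj Ps p[i] b then x (p[i]).castSucc - x b.castSucc else 0) =
      (if i = 0 then 1 else 0) - (if i = m + 1 then 1 else 0) := by
    intro i h
    rw [hf i h, ← leaf_row hPs, hx, hu0, hv0]
    simp [Pi.single_apply, Fin.castSucc_inj, hnd.getElem_inj_iff]
  have key : f 0 - f (m + 1) < Real.sqrt 5 - 1 := by
    apply path_aux
    · have r := row 0 (by omega)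
      have e : ∀ b, PAdj Ps p[0] b ↔ b = p[1] := by
        intro b
        rw [padj_iff hPs hp]
        constructor
        · rintro (⟨_, h⟩ | ⟨j, h, _⟩)
          · exact h
          · omega
        · intro h; exact Or.inl ⟨by omega, h⟩
      simp only [e, Finset.sum_ite_eq', Finset.mem_univ, if_true] at r
      rw [if_neg (by omega)] at r
      have h0 := hf 0 (by omega)
      have h1 := hf 1 (by omega)
      linarith
    · intro i hi
      have r := row (i + 1) (by omega)
      have e : ∀ b, PAdj Ps p[i + 1] b ↔ (b = p[i + 2] ∨ b = p[i]) := by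
        intro b
        rw [padj_iff hPs hp]
        constructor
        · rintro (⟨_, h⟩ | ⟨j, h, h'⟩)
          · exact Or.inl h
          · obtain rfl : j = i := by omega
            exact Or.inr h'
        · rintro (h | h)
          · exact Or.inl ⟨by omega, h⟩
          · exact Or.inr ⟨i, rfl, h⟩
      have hne' : p[i + 2] ≠ p[i] := by
        intro h
        have := (hnd.getElem_inj_iff).1 h
        omega
      have e2 : ∀ b, (if PAdj Ps p[i + 1] b then x (p[i + 1]).castSucc - x b.castSucc else 0)
          = (if b = p[i + 2] then x (p[i + 1]).castSucc - x b.castSucc else 0)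
          + (if b = p[i] then x (p[i + 1]).castSucc - x b.castSucc else 0) := by
        intro b
        by_cases h1 : b = p[i + 2]
        · have h2 : b ≠ p[i] := h1 ▸ hne'
          rw [if_pos ((e b).2 (Or.inl h1)), if_pos h1, if_neg h2, add_zero]
        · by_cases h2 : b = p[i]
          · rw [if_pos ((e b).2 (Or.inr h2)), if_neg h1, if_pos h2, zero_add]
          · rw [if_neg (by rw [e]; tauto), if_neg h1, if_neg h2, add_zero]
      simp only [e2, Finset.sum_add_distrib, Finset.sum_ite_eq', Finset.mem_univ, if_true] at r
      rw [if_neg (by omega), if_neg (by omega)] at r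
      have h0 := hf i (by omega)
      have h1 := hf (i + 1) (by omega)
      have h2 := hf (i + 2) (by omega)
      linarith
    · have r := row (m + 1) (by omega)
      have e : ∀ b, PAdj Ps p[m + 1] b ↔ b = p[m] := by
        intro b
        rw [padj_iff hPs hp]
        constructor
        · rintro (⟨h, _⟩ | ⟨j, h, h'⟩)
          · omega
          · obtain rfl : j = m := by omega
            exact h'
        · intro h; exact Or.inr ⟨m, rfl, h⟩
      simp only [e, Finset.sum_ite_eq', Finset.mem_univ, if_true] at r
      rw [if_neg (by omega)] at r
      have h0 := hf m (by omega)
      have h1 := hf (m + 1) (by omega)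
      linarith
  rw [hf 0 (by omega), hf (m + 1) (by omega), ← hu0, ← hv0] at key
  rw [sub_dotProduct, single_one_dotProduct, single_one_dotProduct]
  linarith
end

section
/- For every integer n ≥ 3, the number of spanning trees of the wheel graph W_n satisfies T(W_n) < √5 · T(F_n). -/
open Matrix

/-- The fan graph `F_n`: the star `S_n` plus a path of `n - 1` unit-weight edges
through the `n` leaves. -/
def fanW (n : ℕ) : Fin (n + 1) → Fin (n + 1) → ℝ :=
  fun i j => starW n i j +
    if ((i : ℕ) + 1 = (j : ℕ) ∧ j ≠ Fin.last n) ∨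
       ((j : ℕ) + 1 = (i : ℕ) ∧ i ≠ Fin.last n) then 1 else 0

/-- The wheel graph `W_n`: the star `S_n` plus a cycle of `n` unit-weight edges
through the `n` leaves. -/
def wheelW (n : ℕ) : Fin (n + 1) → Fin (n + 1) → ℝ :=
  fun i j => starW n i j +
    if i ≠ j ∧ i ≠ Fin.last n ∧ j ≠ Fin.last n ∧
        (((i : ℕ) + 1) % n = (j : ℕ) ∨ ((j : ℕ) + 1) % n = (i : ℕ)) then 1 else 0

lemma aux_sum_eq (n c : ℕ) (f : ℕ → ℝ) :
    ∑ k : Fin n, (if (k : ℕ) = c then f k else 0) = if c < n then f c else 0 := by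
  rw [Fin.sum_univ_eq_sum_range (fun k => if k = c then f k else 0) n]
  simp [Finset.sum_ite_eq']

lemma aux_sum_succ (n c : ℕ) (f : ℕ → ℝ) (hc : c ≤ n) :
    ∑ k : Fin n, (if (k : ℕ) + 1 = c then f k else 0) = if 0 < c then f (c - 1) else 0 := by
  cases c with
  | zero => simp
  | succ c =>
    simp only [Nat.add_right_cancel_iff]
    rw [aux_sum_eq]
    simp [Nat.lt_of_succ_le hc]

/-- Reduced fan Laplacian, written out. -/
def fanM (n : ℕ) : Matrix (Fin n) (Fin n) ℝ := fun i j =>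
  if (i : ℕ) = j then 1 + (if (i : ℕ) + 1 < n then 1 else 0) + (if 0 < (i : ℕ) then 1 else 0)
  else -(if (i : ℕ) + 1 = j ∨ (j : ℕ) + 1 = i then 1 else 0)

/-- Endpoint difference vector. -/
def endV (n : ℕ) : Fin n → ℝ := fun i =>
  (if (i : ℕ) = 0 then 1 else 0) - (if (i : ℕ) + 1 = n then 1 else 0)

lemma fan_cast (n : ℕ) (i k : Fin n) : fanW n i.castSucc k.castSucc =
    (if (k : ℕ) = (i : ℕ) + 1 then 1 else 0) + (if (k : ℕ) + 1 = (i : ℕ) then 1 else 0) := by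
  have h1 := i.isLt
  have h2 := k.isLt
  simp only [fanW, starW, Fin.ext_iff, ne_eq, Fin.val_castSucc, Fin.val_last]
  split_ifs <;> first | omega | norm_num

lemma fan_last (n : ℕ) (i : Fin n) : fanW n i.castSucc (Fin.last n) = 1 := by
  have h1 := i.isLt
  have h2 : ¬ ((i : ℕ) = n) := by omega
  have h3 : ¬ (n + 1 = (i : ℕ)) := by omega
  simp [fanW, starW, Fin.ext_iff, h2, h3]

lemma wheel_last (n : ℕ) (i : Fin n) : wheelW n i.castSucc (Fin.last n) = 1 := by
  have h1 := i.isLt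
  have h2 : ¬ ((i : ℕ) = n) := by omega
  have h3 : ¬ (n + 1 = (i : ℕ)) := by omega
  simp [wheelW, starW, Fin.ext_iff, h2, h3]

lemma wheel_cast (n : ℕ) (hn : 3 ≤ n) (i k : Fin n) : wheelW n i.castSucc k.castSucc =
    fanW n i.castSucc k.castSucc +
    ((if (i : ℕ) = 0 then (if (k : ℕ) + 1 = n then 1 else 0) else 0) +
     (if (i : ℕ) + 1 = n then (if (k : ℕ) = 0 then 1 else 0) else 0)) := by
  have h1 := i.isLt
  have h2 := k.isLt
  have e : ∀ a : ℕ, a < n → (a + 1) % n = if a + 1 = n then 0 else a + 1 := by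
    intro a ha
    split_ifs with h
    · simp [h]
    · exact Nat.mod_eq_of_lt (by omega)
  rw [fan_cast]
  simp only [wheelW, starW, Fin.ext_iff, ne_eq, Fin.val_castSucc, Fin.val_last, e _ h1, e _ h2]
  split_ifs <;> first | omega | norm_num

lemma fan_row (n : ℕ) (i : Fin n) : ∑ k, fanW n i.castSucc k =
    1 + (if (i : ℕ) + 1 < n then 1 else 0) + (if 0 < (i : ℕ) then 1 else 0) := by
  rw [Fin.sum_univ_castSucc, fan_last]
  simp only [fan_cast, Finset.sum_add_distrib]
  rw [aux_sum_eq n _ (fun _ => 1), aux_sum_succ n _ (fun _ => 1) i.isLt.le]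
  ring

lemma wheel_row (n : ℕ) (hn : 3 ≤ n) (i : Fin n) : ∑ k, wheelW n i.castSucc k =
    ∑ k, fanW n i.castSucc k +
      ((if (i : ℕ) = 0 then 1 else 0) + (if (i : ℕ) + 1 = n then 1 else 0)) := by
  rw [Fin.sum_univ_castSucc, Fin.sum_univ_castSucc, fan_last, wheel_last]
  simp only [wheel_cast n hn, Finset.sum_add_distrib]
  have a1 := aux_sum_succ n n (fun _ => 1) le_rfl
  have a2 := aux_sum_eq n 0 (fun _ => 1)
  have h0 : 0 < n := by omega
  simp only [h0, if_true] at a1 a2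
  have b1 : ∑ x : Fin n, (if (i : ℕ) = 0 then (if (x : ℕ) + 1 = n then (1 : ℝ) else 0) else 0)
      = if (i : ℕ) = 0 then 1 else 0 := by
    split_ifs
    · exact a1
    · simp
  have b2 : ∑ x : Fin n, (if (i : ℕ) + 1 = n then (if (x : ℕ) = 0 then (1 : ℝ) else 0) else 0)
      = if (i : ℕ) + 1 = n then 1 else 0 := by
    split_ifs
    · exact a2
    · simp
  rw [b1, b2]
  ring

lemma fan_mat (n : ℕ) : (lapG (fanW n)).submatrix Fin.castSucc Fin.castSucc = fanM n := by
  ext i j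
  simp only [Matrix.submatrix_apply, lapG, fanM, fan_row, fan_cast, Fin.ext_iff, Fin.val_castSucc]
  split_ifs <;> first | omega | norm_num

lemma wheel_mat (n : ℕ) (hn : 3 ≤ n) :
    (lapG (wheelW n)).submatrix Fin.castSucc Fin.castSucc =
      fanM n + Matrix.vecMulVec (endV n) (endV n) := by
  ext i j
  rw [← fan_mat]
  simp only [Matrix.submatrix_apply, Matrix.add_apply, Matrix.vecMulVec_apply, endV, lapG,
    wheel_row n hn, wheel_cast n hn, Fin.ext_iff, Fin.val_castSucc]
  split_ifs <;> first | omega | ring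

/-- Incidence matrix of the path. -/
def incM (n : ℕ) : Matrix (Fin n) (Fin n) ℝ := fun k i =>
  if (k : ℕ) + 1 < n then (if (k : ℕ) = i then 1 else 0) - (if (k : ℕ) + 1 = i then 1 else 0) else 0

lemma fan_eq (n : ℕ) : fanM n = 1 + (incM n)ᴴ * incM n := by
  ext i j
  have h1 := i.isLt
  have h2 := j.isLt
  obtain ⟨g, hg⟩ : ∃ g : ℕ → ℝ, ∀ k, g k = if k + 1 < n then
      ((if k = (j : ℕ) then (1 : ℝ) else 0) - (if k + 1 = (j : ℕ) then 1 else 0)) else 0 :=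
    ⟨_, fun _ => rfl⟩
  have key : ((incM n)ᴴ * incM n) i j =
      ∑ k : Fin n, ((if (k : ℕ) = i then g k else 0) - (if (k : ℕ) + 1 = i then g k else 0)) := by
    simp only [Matrix.mul_apply, Matrix.conjTranspose_apply, incM, star_trivial, hg]
    refine Finset.sum_congr rfl fun k _ => ?_
    split_ifs <;> first | omega | ring
  rw [Matrix.add_apply, key, Finset.sum_sub_distrib, aux_sum_eq, aux_sum_succ _ _ _ h1.le]
  simp only [hg]
  simp only [fanM, Matrix.one_apply, Fin.ext_iff]
  split_ifs <;> first | omega | norm_num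

lemma fan_det_pos (n : ℕ) : 0 < (fanM n).det := by
  rw [fan_eq]
  exact (Matrix.PosDef.one.add_posSemidef (Matrix.posSemidef_conjTranspose_mul_self _)).det_pos

lemma fan_mulVec (n : ℕ) (f : ℕ → ℝ) (i : Fin n) : (fanM n *ᵥ fun j => f j) i =
    (1 + (if (i : ℕ) + 1 < n then 1 else 0) + (if 0 < (i : ℕ) then 1 else 0)) * f i
    - (if (i : ℕ) + 1 < n then f (i + 1) else 0) - (if 0 < (i : ℕ) then f (i - 1) else 0) := by
  have h1 := i.isLt
  obtain ⟨g, hg⟩ : ∃ g : ℕ → ℝ, ∀ k, g k = (1 + (if (i : ℕ) + 1 < n then 1 else 0) +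
        (if 0 < (i : ℕ) then 1 else 0)) * f k := ⟨_, fun _ => rfl⟩
  have key : (fanM n *ᵥ fun j => f j) i = ∑ k : Fin n,
      ((if (k : ℕ) = i then g k else 0)
      - (if (k : ℕ) = i + 1 then f k else 0) - (if (k : ℕ) + 1 = i then f k else 0)) := by
    simp only [Matrix.mulVec, dotProduct, fanM, hg]
    refine Finset.sum_congr rfl fun k _ => ?_
    have h2 := k.isLt
    split_ifs <;> first | omega | ring
  rw [key, Finset.sum_sub_distrib, Finset.sum_sub_distrib, aux_sum_eq, aux_sum_eq,
    aux_sum_succ _ _ _ h1.le, if_pos h1, hg]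

lemma fib_odd (k : ℕ) : (Nat.fib (2 * (k + 2) + 1) : ℝ) =
    3 * Nat.fib (2 * (k + 1) + 1) - Nat.fib (2 * k + 1) := by
  have a := Nat.fib_add_two (n := 2 * k + 1)
  have b := Nat.fib_add_two (n := 2 * k + 2)
  have c := Nat.fib_add_two (n := 2 * k + 3)
  have h : Nat.fib (2 * k + 5) + Nat.fib (2 * k + 1) = 3 * Nat.fib (2 * k + 3) := by
    ring_nf at a b c ⊢
    omega
  have h' : (Nat.fib (2 * k + 5) : ℝ) + Nat.fib (2 * k + 1) = 3 * Nat.fib (2 * k + 3) := by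
    exact_mod_cast h
  have e1 : 2 * (k + 2) + 1 = 2 * k + 5 := by ring
  have e2 : 2 * (k + 1) + 1 = 2 * k + 3 := by ring
  rw [e1, e2]
  linarith

lemma cassini (m : ℕ) : (Nat.fib (2 * m + 1) : ℝ) ^ 2 + Nat.fib (2 * m + 1) * Nat.fib (2 * m + 2)
    - Nat.fib (2 * m + 2) ^ 2 = 1 := by
  induction m with
  | zero => norm_num
  | succ m ih =>
    have a := Nat.fib_add_two (n := 2 * m + 1)
    have b := Nat.fib_add_two (n := 2 * m + 2)
    have e1 : 2 * (m + 1) + 1 = 2 * m + 1 + 2 := by ring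
    have e2 : 2 * (m + 1) + 2 = 2 * m + 2 + 2 := by ring
    rw [e1, e2, b, show 2 * m + 2 + 1 = 2 * m + 1 + 2 by ring, a]
    push_cast
    rw [show 2 * m + 1 + 1 = 2 * m + 2 by ring]
    linear_combination ih

/-- Odd Fibonacci numbers as reals. -/
def oddF (k : ℕ) : ℝ := Nat.fib (2 * k + 1)

lemma fan_solve (m : ℕ) : fanM (m + 3) *ᵥ (fun j => oddF (m + 2 - (j : ℕ)) - oddF j) =
    (Nat.fib (2 * (m + 2) + 2) : ℝ) • endV (m + 3) := by
  ext i
  have h1 := i.isLt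
  rw [fan_mulVec (m + 3) (fun j => oddF (m + 2 - j) - oddF j)]
  simp only [Pi.smul_apply, endV, smul_eq_mul]
  have hrec : ∀ k, oddF (k + 2) = 3 * oddF (k + 1) - oddF k := fib_odd
  have h0 : oddF 0 = 1 := by simp [oddF]
  have h01 : oddF 1 = 2 := by norm_num [oddF, Nat.fib_add_two]
  have hq : (Nat.fib (2 * (m + 2) + 2) : ℝ) = 2 * oddF (m + 2) - oddF (m + 1) := by
    have r := hrec (m + 1)
    have a := Nat.fib_add_two (n := 2 * (m + 2) + 1)
    have a' : oddF (m + 3) = oddF (m + 2) + Nat.fib (2 * (m + 2) + 2) := by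
      simp only [oddF]
      exact_mod_cast a
    have r' : oddF (m + 3) = 3 * oddF (m + 2) - oddF (m + 1) := r
    linarith
  rw [hq]
  by_cases c1 : (i : ℕ) = 0
  · simp [c1, h0, h01]
    ring
  · by_cases c2 : (i : ℕ) = m + 2
    · simp [c2, h0, h01]
      ring
    · obtain ⟨k, hk⟩ : ∃ k, (i : ℕ) = k + 1 := ⟨i - 1, by omega⟩
      obtain ⟨l, hl⟩ : ∃ l, m = k + l := ⟨m - k, by omega⟩
      rw [hk, hl]
      have e1 : k + l + 2 - (k + 1) = l + 1 := by omega
      have e2 : k + l + 2 - (k + 1 + 1) = l := by omega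
      have e3 : k + l + 2 - k = l + 2 := by omega
      have i1 : k + 1 + 1 < k + l + 3 := by omega
      have i3 : ¬ (k + 1 + 1 = k + l + 3) := by omega
      simp only [e1, e2, e3, if_pos i1, if_neg i3, Nat.succ_pos, if_true, Nat.add_sub_cancel,
        Nat.succ_ne_zero, if_false, hrec l, show k + 1 + 1 = k + 2 from rfl, hrec k]
      ring

theorem stmt10 (n : ℕ) (hn : 3 ≤ n) :
    nst (wheelW n) < Real.sqrt 5 * nst (fanW n) := by
  unfold nst
  rw [fan_mat, wheel_mat n hn]
  obtain ⟨m, rfl⟩ : ∃ m, n = m + 3 := ⟨n - 3, by omega⟩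
  set q : ℝ := ((Nat.fib (2 * (m + 2) + 2) : ℕ) : ℝ) with hq
  have hq0 : 0 < q := by
    rw [hq]
    exact_mod_cast Nat.fib_pos.2 (by omega)
  set x : Fin (m + 3) → ℝ := fun j => oddF (m + 2 - (j : ℕ)) - oddF j with hx
  have hs : fanM (m + 3) *ᵥ (q⁻¹ • x) = endV (m + 3) := by
    rw [Matrix.mulVec_smul, hx, fan_solve, ← hq, smul_smul, inv_mul_cancel₀ hq0.ne', one_smul]
  have hf : fanM (m + 3) + Matrix.vecMulVec (endV (m + 3)) (endV (m + 3)) =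
      fanM (m + 3) * (1 + Matrix.vecMulVec (q⁻¹ • x) (endV (m + 3))) := by
    rw [mul_add, mul_one, Matrix.mul_vecMulVec, hs]
  rw [hf, Matrix.det_mul, mul_comm]
  refine mul_lt_mul_of_pos_right ?_ (fan_det_pos _)
  have hd : endV (m + 3) ⬝ᵥ x = 2 * (oddF (m + 2) - 1) := by
    obtain ⟨g, hg⟩ : ∃ g : ℕ → ℝ, ∀ k, g k = oddF (m + 2 - k) - oddF k := ⟨_, fun _ => rfl⟩
    have : endV (m + 3) ⬝ᵥ x = ∑ k : Fin (m + 3),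
        ((if (k : ℕ) = 0 then g k else 0) - (if (k : ℕ) + 1 = m + 3 then g k else 0)) := by
      simp only [dotProduct, endV, hx, hg]
      refine Finset.sum_congr rfl fun k _ => ?_
      split_ifs <;> ring
    rw [this, Finset.sum_sub_distrib, aux_sum_eq, aux_sum_succ _ _ _ le_rfl, hg, hg]
    have h0 : oddF 0 = 1 := by simp [oddF]
    simp [h0]
    ring
  have hdet : (1 + Matrix.vecMulVec (q⁻¹ • x) (endV (m + 3))).det =
      1 + q⁻¹ * (2 * (oddF (m + 2) - 1)) := by
    rw [Matrix.vecMulVec_eq Unit, Matrix.det_one_add_replicateCol_mul_replicateRow,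
      dotProduct_smul, hd, smul_eq_mul]
  rw [hdet]
  have hp : 1 ≤ oddF (m + 2) := by
    unfold oddF
    exact_mod_cast Nat.fib_pos.2 (by omega)
  have hc : oddF (m + 2) ^ 2 + oddF (m + 2) * q - q ^ 2 = 1 := cassini (m + 2)
  have hq1 : 1 ≤ q := by
    rw [hq]
    exact_mod_cast Nat.fib_pos.2 (by omega)
  apply Real.lt_sqrt_of_sq_lt
  have : 1 + q⁻¹ * (2 * (oddF (m + 2) - 1)) = (q + 2 * (oddF (m + 2) - 1)) / q := by
    field_simp
  rw [this, div_pow, div_lt_iff₀ (by positivity)]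
  nlinarith
end
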